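/- Let p ∈ [0, 1/2], let Y = (Y₁, …, Y_n) be i.i.d. {0,1}-valued random variables each equal to 1 with probability p, and let t ∈ ℕ. Then for every fixed s ∈ (ZMod 2)^n, P(hammingDist(Y, s) ≤ t) ≤ P(wt(Y) ≤ t). -/

import Mathlib

/-!
Condition on the first coordinate. If `s₀ = 0` the distance counter is left unchanged with
probability `1 - p` and increased by one with probability `p`; if `s₀ = 1` the two probabilities
are exchanged. Leaving the counter unchanged makes the event more likely, so for `p ≤ 1 / 2` the
choice `s₀ = 0` is the better one, whatever the other coordinates of `s` are. Induction on the
length replaces all of `s` by `0`; the lemma `bernP_hammingDist_add_le` carries this out, with the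
event generalized to `hammingDist y s + k ≤ t` so that a mismatch in the first coordinate
becomes `k + 1`.
-/

open Finset
open scoped BigOperators Classical

noncomputable section

/-- `ldgmBeta w δ = (1 - (1-2w)^δ)/2`: the Bernoulli parameter induced by an
input of relative weight `w` in the degree-`δ` LDGM ensemble. -/
def ldgmBeta (w : ℝ) (δ : ℕ) : ℝ := (1 - (1 - 2 * w) ^ δ) / 2

/-- `ldgmU D δ = (1 - (1-2D)^(1/δ))/2`. -/
def ldgmU (D : ℝ) (δ : ℕ) : ℝ := (1 - (1 - 2 * D) ^ ((1 : ℝ) / δ)) / 2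

/-- Binary entropy function (in bits). -/
def binEnt (x : ℝ) : ℝ := -(x * Real.logb 2 x) - (1 - x) * Real.logb 2 (1 - x)

/-- Binary Kullback–Leibler divergence (in bits). -/
def klBin (a p : ℝ) : ℝ := a * Real.logb 2 (a / p) + (1 - a) * Real.logb 2 ((1 - a) / (1 - p))

/-- Probability of the event `E` under the uniform distribution on the finite type `Ω`. -/
def unifP (Ω : Type*) [Fintype Ω] (E : Ω → Prop) : ℝ :=
  ((Finset.univ.filter E).card : ℝ) / (Fintype.card Ω : ℝ)

/-- Conditional probability of `E` given `F` under the uniform distribution on `Ω`. -/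
def unifCondP (Ω : Type*) [Fintype Ω] (E F : Ω → Prop) : ℝ :=
  unifP Ω (fun ω => E ω ∧ F ω) / unifP Ω F

/-- Expectation of `f` under the uniform distribution on the finite type `Ω`. -/
def unifE (Ω : Type*) [Fintype Ω] (f : Ω → ℝ) : ℝ :=
  (∑ ω : Ω, f ω) / (Fintype.card Ω : ℝ)

/-- The encoding map of the degree-`δ` LDGM ensemble with `m` inputs and blocklength `n`:
given the random index choices `I`, the `j`-th codeword bit of `z` is
`z (I j 1) + ⋯ + z (I j δ)` (mod 2). -/
def ldgmEnc {m n δ : ℕ} (I : Fin n → Fin δ → Fin m) (z : Fin m → ZMod 2) :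
    Fin n → ZMod 2 := fun j => ∑ i : Fin δ, z (I j i)

/-- Probability of the event `E` when the coordinates `Y₁, …, Y_n` are i.i.d.
`{0,1}`-valued with `P(Y_j = 1) = p`. -/
def bernP {n : ℕ} (p : ℝ) (E : (Fin n → ZMod 2) → Prop) : ℝ :=
  ∑ y : Fin n → ZMod 2, if E y then ∏ j, (if y j = 1 then p else 1 - p) else 0

lemma bernP_mono {n : ℕ} {p : ℝ} (h0 : 0 ≤ p) (h1 : p ≤ 1) {E F : (Fin n → ZMod 2) → Prop}
    (h : ∀ y, E y → F y) : bernP p E ≤ bernP p F := by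
  unfold bernP
  refine Finset.sum_le_sum fun y _ => ?_
  have hprod : 0 ≤ ∏ j, (if y j = 1 then p else 1 - p) :=
    Finset.prod_nonneg fun j _ => by split_ifs <;> linarith
  by_cases hE : E y
  · rw [if_pos hE, if_pos (h y hE)]
  · rw [if_neg hE]
    split_ifs <;> simp [hprod]

/-- Conditioning on the first coordinate. -/
lemma bernP_succ {n : ℕ} (p : ℝ) (E : (Fin (n + 1) → ZMod 2) → Prop) :
    bernP p E = (1 - p) * bernP p (fun y : Fin n → ZMod 2 => E (Fin.cons 0 y)) +
      p * bernP p (fun y : Fin n → ZMod 2 => E (Fin.cons 1 y)) := by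
  have hZ : ∀ f : ZMod 2 → ℝ, ∑ a, f a = f 0 + f 1 := fun f => Fin.sum_univ_two f
  unfold bernP
  rw [← (Fin.consEquiv (fun _ : Fin (n + 1) => ZMod 2)).sum_comp, Fintype.sum_prod_type, hZ,
    Finset.mul_sum, Finset.mul_sum]
  simp [Fin.consEquiv, Fin.prod_univ_succ]

lemma hammingDist_cons {n : ℕ} (a b : ZMod 2) (x y : Fin n → ZMod 2) :
    hammingDist (Fin.cons a x : Fin (n + 1) → ZMod 2) (Fin.cons b y) =
      (if a = b then 0 else 1) + hammingDist x y := by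
  simp only [hammingDist, Finset.card_filter, Fin.sum_univ_succ, Fin.cons_zero, Fin.cons_succ]
  by_cases h : a = b <;> simp [h]

lemma bernP_hammingDist_add_le {p : ℝ} (h0 : 0 ≤ p) (h1 : p ≤ 1 / 2) (t : ℕ) :
    ∀ (n : ℕ) (s : Fin n → ZMod 2) (k : ℕ),
      bernP p (fun y => hammingDist y s + k ≤ t) ≤
        bernP p (fun y : Fin n → ZMod 2 => hammingDist y 0 + k ≤ t) := by
  intro n
  induction n with
  | zero => intro s k; rw [Subsingleton.elim s 0]
  | succ n ih =>
    intro s k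
    obtain ⟨b, s, rfl⟩ : ∃ b s', s = Fin.cons b s' :=
      ⟨s 0, Fin.tail s, (Fin.cons_self_tail s).symm⟩
    have hzero : (0 : Fin (n + 1) → ZMod 2) = Fin.cons 0 0 := by
      funext i; refine Fin.cases ?_ (fun j => ?_) i <;> simp
    have hb : b = 0 ∨ b = 1 := by revert b; decide
    have e : ∀ m : ℕ, 1 + m + k = m + (k + 1) := fun m => by omega
    have hk := ih s k
    have hk' := ih s (k + 1)
    have hm : bernP p (fun y => hammingDist y s + (k + 1) ≤ t) ≤
        bernP p (fun y => hammingDist y s + k ≤ t) :=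
      bernP_mono h0 (by linarith) fun y hy => by omega
    rw [hzero, bernP_succ, bernP_succ]
    rcases hb with rfl | rfl
    · simp only [hammingDist_cons, if_true, one_ne_zero, if_false, zero_add, e]
      nlinarith
    · simp only [hammingDist_cons, if_true, one_ne_zero, zero_ne_one, if_false, zero_add, e]
      -- The exchange loses `(1 - 2 * p)` times the gap in `hm`.
      nlinarith [mul_nonneg (show 0 ≤ 1 - 2 * p by linarith) (sub_nonneg.2 hm),
        mul_nonneg h0 (sub_nonneg.2 hk'), mul_nonneg (show 0 ≤ 1 - p by linarith)
        (sub_nonneg.2 hk)]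

/-- if `Y₁, …, Y_n` are i.i.d. Bernoulli(`p`) with `p ∈ [0,1/2]`, then for
every fixed `s`, `P(hammingDist(Y,s) ≤ t) ≤ P(wt(Y) ≤ t)`. -/
theorem bernoulli_distance_maximized_at_zero (n : ℕ) (p : ℝ)
    (hp : p ∈ Set.Icc (0 : ℝ) (1 / 2)) (t : ℕ) (s : Fin n → ZMod 2) :
    bernP p (fun y => hammingDist y s ≤ t) ≤ bernP (n := n) p (fun y => hammingNorm y ≤ t) := by
  simpa only [add_zero, hammingDist_zero_right] using
    bernP_hammingDist_add_le hp.1 hp.2 t n s 0
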